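/- arXiv:1212.2264 — 2 statements merged into one kernel-verified Lean document; each statement's English description precedes it below -/
import Mathlib

section
/- Let G have m edges, W ≥ m wedges, and let S be a fixed set of wedges. Let X count wedges of S formed by s i.i.d. uniform random edges, where s ≥ m/√W. Then Var[X] ≤ 18 s³ W^{3/2} / m³. -/
open Finset

open scoped BigOperators

/-!
Let `X` be the number of sampled pairs that lie in `S`, and let `D i` be the number of samples that
form an element of `S` with the `i`-th one. Two of the indicators summed in `X` are independent
unless their index pairs meet, and `∑ i, D i ^ 2` counts the product of two indicators once for each
index common to their pairs. Hence `Var[X] ≤ ∑ i, 𝔼[D i ^ 2]`. Given that the `i`-th sample is `e`,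
`D i` is binomial with success probability `δ e / m`, where `δ e` is the number of edges that form a
wedge of `S` with `e`, so `Var[X] ≤ k² (∑ e, δ e) / m² + k³ (∑ e, δ e ^ 2) / m³`.

An edge `e = uv` satisfies `δ e ≤ (d_u - 1) + (d_v - 1)`. Summing over the edges gives
`∑ e, δ e ≤ 2 W` and `∑ e, δ e ^ 2 ≤ 2 ∑ v, d_v (d_v - 1)²`, which is at most `2 (2 W)^{3/2}`, as
`(d_v - 1)² ≤ ∑ u, d_u (d_u - 1) = 2 W`. Finally `m ≤ k √W` says that `k √W / m` is at least `1`, so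
the cubic term of the variance bound absorbs the quadratic one.
-/

/-- The variance of `f` under the uniform distribution on `Ω`, as a difference of finite averages
so that no measure has to be put on `Ω`. -/
noncomputable def uniformVariance {Ω : Type*} [Fintype Ω] (f : Ω → ℝ) : ℝ :=
  𝔼 x, f x ^ 2 - (𝔼 x, f x) ^ 2

section Expectation

variable {ι : Type*} [Fintype ι] [DecidableEq ι] {E : ι → Type*} [∀ i, Fintype (E i)]

theorem expect_prod_type {α β M : Type*} [Fintype α] [Fintype β] [AddCommMonoid M] [Module ℚ≥0 M]
    (f : α × β → M) : 𝔼 x, f x = 𝔼 a, 𝔼 b, f (a, b) := by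
  rw [← univ_product_univ, expect_product]

theorem expect_expect_update {M : Type*} [AddCommMonoid M] [Module ℚ≥0 M]
    (f : (∀ i, E i) → M) (i : ι) :
    𝔼 r, 𝔼 e, f (Function.update r i e) = 𝔼 r, f r := by
  have swap_involutive : Function.Involutive
      fun x : (∀ i, E i) × E i => (Function.update x.1 i x.2, x.1 i) := by
    rintro ⟨r, e⟩
    simp
  calc 𝔼 r, 𝔼 e, f (Function.update r i e)
      = 𝔼 x : (∀ i, E i) × E i, f (Function.update x.1 i x.2) :=
        (expect_prod_type fun x : (∀ i, E i) × E i => f (Function.update x.1 i x.2)).symm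
    _ = 𝔼 x : (∀ i, E i) × E i, f x.1 :=
        Fintype.expect_bijective _ swap_involutive.bijective _ (fun x => f x.1) fun _ => rfl
    _ = 𝔼 r, 𝔼 _e : E i, f r := expect_prod_type fun x => f x.1
    _ = 𝔼 r, f r := expect_congr rfl fun r _ =>
        haveI : Nonempty (E i) := ⟨r i⟩
        Fintype.expect_const _

theorem expect_comp_eval {M : Type*} [AddCommMonoid M] [Module ℚ≥0 M] [∀ i, Nonempty (E i)]
    (i : ι) (φ : E i → M) : 𝔼 r : ∀ i, E i, φ (r i) = 𝔼 e, φ e := by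
  rw [← expect_expect_update _ i]
  simp only [Function.update_self, Fintype.expect_const]

-- Swapping the coordinates in `s` between two independent samples preserves their joint law.
theorem expect_mul_of_dependsOn_disjoint {R : Type*} [Semiring R] [Module ℚ≥0 R]
    [IsScalarTower ℚ≥0 R R] [SMulCommClass ℚ≥0 R R] {f g : (∀ i, E i) → R} {s t : Finset ι}
    (hf : DependsOn f s) (hg : DependsOn g t) (hst : Disjoint s t) :
    𝔼 r, f r * g r = (𝔼 r, f r) * 𝔼 r, g r := by
  have swap_involutive : Function.Involutive
      fun x : (∀ i, E i) × (∀ i, E i) => (s.piecewise x.1 x.2, s.piecewise x.2 x.1) := by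
    rintro ⟨r, r'⟩
    ext i <;> by_cases hi : i ∈ s <;> simp [hi]
  have f_swap (r r' : ∀ i, E i) : f (s.piecewise r r') = f r :=
    hf fun _ hi => s.piecewise_eq_of_mem _ _ hi
  have g_swap (r r' : ∀ i, E i) : g (s.piecewise r r') = g r' :=
    hg fun _ hi => s.piecewise_eq_of_notMem _ _ (disjoint_right.1 hst hi)
  calc 𝔼 r, f r * g r
      = 𝔼 r, 𝔼 _r' : ∀ i, E i, f r * g r := expect_congr rfl fun r _ =>
        haveI : Nonempty (∀ i, E i) := ⟨r⟩
        (Fintype.expect_const _).symm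
    _ = 𝔼 x : (∀ i, E i) × (∀ i, E i), f x.1 * g x.1 :=
        (expect_prod_type fun x => f x.1 * g x.1).symm
    _ = 𝔼 x : (∀ i, E i) × (∀ i, E i), f x.1 * g x.2 :=
        (Fintype.expect_bijective _ swap_involutive.bijective _ _ fun x => by
          simp only [f_swap, g_swap]).symm
    _ = 𝔼 r, 𝔼 r', f r * g r' := expect_prod_type _
    _ = (𝔼 r, f r) * 𝔼 r, g r := (Fintype.expect_mul_expect f g).symm

end Expectation

section Variance

variable {Ω ι κ : Type*} [Fintype Ω] [Fintype ι] [DecidableEq ι]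

theorem uniformVariance_eq_sum_div_card (f : Ω → ℝ) :
    uniformVariance f
      = (∑ x, f x ^ 2) / Fintype.card Ω - ((∑ x, f x) / Fintype.card Ω) ^ 2 := by
  simp only [uniformVariance, Fintype.expect_eq_sum_div_card]

theorem uniformVariance_sum (P : Finset κ) (f : κ → Ω → ℝ) :
    uniformVariance (fun x => ∑ p ∈ P, f p x)
      = ∑ p ∈ P, ∑ q ∈ P, (𝔼 x, f p x * f q x - (𝔼 x, f p x) * 𝔼 x, f q x) := by
  simp only [uniformVariance, sq, sum_mul_sum, expect_sum_comm, sum_sub_distrib]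

theorem sum_sq_sum_filter_mem {R : Type*} [Semiring R] (P : Finset κ) (t : κ → Finset ι)
    (a : κ → R) :
    ∑ i, (∑ p ∈ P with i ∈ t p, a p) ^ 2
      = ∑ p ∈ P, ∑ q ∈ P, #(t p ∩ t q) * (a p * a q) := by
  calc ∑ i, (∑ p ∈ P with i ∈ t p, a p) ^ 2
      = ∑ i, ∑ p ∈ P, ∑ q ∈ P, if i ∈ t p ∩ t q then a p * a q else 0 := by
        simp only [sq, sum_filter, sum_mul_sum, ite_zero_mul_ite_zero, mem_inter]
    _ = ∑ p ∈ P, ∑ q ∈ P, ∑ i, if i ∈ t p ∩ t q then a p * a q else 0 :=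
        sum_comm.trans (sum_congr rfl fun _ _ => sum_comm)
    _ = ∑ p ∈ P, ∑ q ∈ P, #(t p ∩ t q) * (a p * a q) := by
        simp only [sum_ite_mem, univ_inter, sum_const, nsmul_eq_mul]

theorem uniformVariance_sum_le_of_dependsOn {E : ι → Type*} [∀ i, Fintype (E i)]
    (P : Finset κ) {f : κ → (∀ i, E i) → ℝ} {t : κ → Finset ι}
    (hf : ∀ p, DependsOn (f p) (t p)) (hf_nonneg : ∀ p r, 0 ≤ f p r) :
    uniformVariance (fun r => ∑ p ∈ P, f p r)
      ≤ ∑ i, 𝔼 r, (∑ p ∈ P with i ∈ t p, f p r) ^ 2 := by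
  have covariance_le (p q : κ) : 𝔼 r, f p r * f q r - (𝔼 r, f p r) * 𝔼 r, f q r
      ≤ #(t p ∩ t q) * 𝔼 r, f p r * f q r := by
    by_cases hpq : Disjoint (t p) (t q)
    · rw [expect_mul_of_dependsOn_disjoint (hf p) (hf q) hpq, disjoint_iff_inter_eq_empty.1 hpq]
      simp
    · have one_le_card : (1 : ℝ) ≤ #(t p ∩ t q) := by
        exact_mod_cast (not_disjoint_iff_nonempty_inter.1 hpq).card_pos
      have expect_f_nonneg (p : κ) : 0 ≤ 𝔼 r, f p r := expect_nonneg fun r _ => hf_nonneg p r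
      calc 𝔼 r, f p r * f q r - (𝔼 r, f p r) * 𝔼 r, f q r
          ≤ 𝔼 r, f p r * f q r :=
            sub_le_self _ (mul_nonneg (expect_f_nonneg p) (expect_f_nonneg q))
        _ ≤ #(t p ∩ t q) * 𝔼 r, f p r * f q r := le_mul_of_one_le_left
            (expect_nonneg fun r _ => mul_nonneg (hf_nonneg p r) (hf_nonneg q r))
            one_le_card
  calc uniformVariance (fun r => ∑ p ∈ P, f p r)
      ≤ ∑ p ∈ P, ∑ q ∈ P, #(t p ∩ t q) * 𝔼 r, f p r * f q r := by
        rw [uniformVariance_sum]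
        exact sum_le_sum fun p _ => sum_le_sum fun q _ => covariance_le p q
    _ = ∑ i, 𝔼 r, (∑ p ∈ P with i ∈ t p, f p r) ^ 2 := by
        simp only [← expect_sum_comm, mul_expect, sum_sq_sum_filter_mem]

end Variance

section PairSum

variable {ι E : Type*} [Fintype ι] [Fintype E] [Nonempty E]

theorem expect_sq_sum_comp_eval_le [DecidableEq ι] (s : Finset ι) (φ : E → ℝ) :
    𝔼 r : ι → E, (∑ j ∈ s, φ (r j)) ^ 2
      ≤ #s * 𝔼 e, φ e ^ 2 + #s ^ 2 * (𝔼 e, φ e) ^ 2 := by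
  have dependsOn_eval (i : ι) : DependsOn (fun r : ι → E => φ (r i)) ({i} : Finset ι) :=
    fun _ _ h => congrArg φ (h i (by simp))
  have expect_mul_le (j l : ι) : 𝔼 r : ι → E, φ (r j) * φ (r l)
      ≤ (if j = l then 𝔼 e, φ e ^ 2 else 0) + (𝔼 e, φ e) ^ 2 := by
    split_ifs with hjl
    · subst hjl
      rw [expect_comp_eval (E := fun _ => E) j fun e => φ e * φ e]
      simpa only [← sq] using le_add_of_nonneg_right (sq_nonneg (𝔼 e, φ e))
    · rw [expect_mul_of_dependsOn_disjoint (dependsOn_eval j) (dependsOn_eval l)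
        (disjoint_singleton.2 hjl), expect_comp_eval (E := fun _ => E) j,
        expect_comp_eval (E := fun _ => E) l, zero_add, sq]
  calc 𝔼 r : ι → E, (∑ j ∈ s, φ (r j)) ^ 2
      = ∑ j ∈ s, ∑ l ∈ s, 𝔼 r : ι → E, φ (r j) * φ (r l) := by
        simp only [sq, sum_mul_sum, expect_sum_comm]
    _ ≤ ∑ j ∈ s, ∑ l ∈ s, ((if j = l then 𝔼 e, φ e ^ 2 else 0) + (𝔼 e, φ e) ^ 2) :=
        sum_le_sum fun j _ => sum_le_sum fun l _ => expect_mul_le j l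
    _ = #s * 𝔼 e, φ e ^ 2 + #s ^ 2 * (𝔼 e, φ e) ^ 2 := by
        simp [sum_add_distrib]
        ring

theorem expect_sq_sum_erase_le [DecidableEq ι] (A : E → E → ℝ) (i : ι) :
    𝔼 r : ι → E, (∑ j ∈ univ.erase i, A (r i) (r j)) ^ 2
      ≤ Fintype.card ι * 𝔼 e, 𝔼 f, A e f ^ 2
        + Fintype.card ι ^ 2 * 𝔼 e, (𝔼 f, A e f) ^ 2 := by
  have sum_update (r : ι → E) (e : E) :
      ∑ j ∈ univ.erase i, A (Function.update r i e i) (Function.update r i e j)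
        = ∑ j ∈ univ.erase i, A e (r j) :=
    sum_congr rfl fun j hj => by
      rw [Function.update_self, Function.update_of_ne (ne_of_mem_erase hj)]
  have card_erase_le : #(univ.erase i) ≤ Fintype.card ι := card_le_univ _
  calc 𝔼 r : ι → E, (∑ j ∈ univ.erase i, A (r i) (r j)) ^ 2
      = 𝔼 e, 𝔼 r : ι → E, (∑ j ∈ univ.erase i, A e (r j)) ^ 2 := by
        rw [← expect_expect_update _ i, expect_comm]
        simp only [sum_update]
    _ ≤ 𝔼 e, (Fintype.card ι * 𝔼 f, A e f ^ 2 + Fintype.card ι ^ 2 * (𝔼 f, A e f) ^ 2) := by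
        refine expect_le_expect fun e _ => (expect_sq_sum_comp_eval_le _ (A e)).trans ?_
        gcongr
    _ = Fintype.card ι * 𝔼 e, 𝔼 f, A e f ^ 2
          + Fintype.card ι ^ 2 * 𝔼 e, (𝔼 f, A e f) ^ 2 := by
        rw [expect_add_distrib, mul_expect, mul_expect]

theorem sum_lt_pairs_containing {M : Type*} [LinearOrder ι] [AddCommMonoid M] {B : ι → ι → M}
    (hB : ∀ i j, B i j = B j i) (i : ι) :
    ∑ p : ι × ι with p.1 < p.2 ∧ i ∈ ({p.1, p.2} : Finset ι), B p.1 p.2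
      = ∑ j ∈ univ.erase i, B i j := by
  refine sum_nbij' (fun p => if p.1 = i then p.2 else p.1) (fun j => (min i j, max i j))
    ?_ ?_ ?_ ?_ ?_
  all_goals grind

theorem uniformVariance_sum_lt_pairs_le [LinearOrder ι] {A : E → E → ℝ}
    (hA : ∀ e f, A e f = A f e) (hA_nonneg : ∀ e f, 0 ≤ A e f) :
    uniformVariance (fun r : ι → E => ∑ p : ι × ι with p.1 < p.2, A (r p.1) (r p.2))
      ≤ Fintype.card ι ^ 2 * 𝔼 e, 𝔼 f, A e f ^ 2
        + Fintype.card ι ^ 3 * 𝔼 e, (𝔼 f, A e f) ^ 2 := by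
  have dependsOn_pair (p : ι × ι) :
      DependsOn (fun r : ι → E => A (r p.1) (r p.2)) ({p.1, p.2} : Finset ι) := fun _ _ h =>
    congrArg₂ A (h p.1 (by simp)) (h p.2 (by simp))
  calc uniformVariance (fun r : ι → E => ∑ p : ι × ι with p.1 < p.2, A (r p.1) (r p.2))
      ≤ ∑ i, 𝔼 r : ι → E, (∑ p ∈ univ.filter (fun p : ι × ι => p.1 < p.2) with
          i ∈ ({p.1, p.2} : Finset ι), A (r p.1) (r p.2)) ^ 2 :=
        uniformVariance_sum_le_of_dependsOn _ dependsOn_pair fun _ _ => hA_nonneg _ _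
    _ = ∑ i, 𝔼 r : ι → E, (∑ j ∈ univ.erase i, A (r i) (r j)) ^ 2 :=
        sum_congr rfl fun i _ => expect_congr rfl fun r _ => by
          rw [filter_filter,
            sum_lt_pairs_containing (B := fun i j => A (r i) (r j)) fun _ _ => hA _ _]
    _ ≤ ∑ _i : ι, (Fintype.card ι * 𝔼 e, 𝔼 f, A e f ^ 2
          + Fintype.card ι ^ 2 * 𝔼 e, (𝔼 f, A e f) ^ 2) :=
        sum_le_sum fun i _ => expect_sq_sum_erase_le A i
    _ = Fintype.card ι ^ 2 * 𝔼 e, 𝔼 f, A e f ^ 2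
          + Fintype.card ι ^ 3 * 𝔼 e, (𝔼 f, A e f) ^ 2 := by
        simp only [sum_const, card_univ, nsmul_eq_mul]
        ring

end PairSum

section PairCount

variable {α : Type*} [DecidableEq α]

/-- The number of pairs of indices `i < j` for which the samples `r i` and `r j` form an element
of `S`. For `α` the edges of a graph and `S` a set of wedges, this is the number of wedges of `S`
formed by the sample `r`. -/
def pairCount {ι : Type*} [Fintype ι] [LinearOrder ι] (S : Finset (Sym2 α)) (r : ι → α) : ℕ :=
  #{p : ι × ι | p.1 < p.2 ∧ s(r p.1, r p.2) ∈ S}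

/-- The number of elements of `T` that form an element of `S` with `e`, that is, the degree of `e`
into `T` in the graph with edge set `S`. -/
def pairDegree (T : Finset α) (S : Finset (Sym2 α)) (e : α) : ℕ :=
  #{f ∈ T | s(e, f) ∈ S}

theorem uniformVariance_pairCount_le {ι : Type*} [Fintype ι] [LinearOrder ι] {T : Finset α}
    (hT : T.Nonempty) (S : Finset (Sym2 α)) :
    uniformVariance (fun r : ι → T => (pairCount S fun i => (r i : α) : ℝ))
      ≤ Fintype.card ι ^ 2 * ((∑ e ∈ T, pairDegree T S e : ℕ) / #T ^ 2)
        + Fintype.card ι ^ 3 * ((∑ e ∈ T, pairDegree T S e ^ 2 : ℕ) / #T ^ 3) := by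
  have : Nonempty T := hT.to_subtype
  let A (e f : T) : ℝ := if s((e : α), (f : α)) ∈ S then 1 else 0
  have A_sq (e f : T) : A e f ^ 2 = A e f := by
    simp only [A, ite_pow, one_pow, ne_eq, OfNat.ofNat_ne_zero, not_false_eq_true, zero_pow]
  have pairCount_eq (r : ι → T) : (pairCount S fun i => (r i : α) : ℝ)
      = ∑ p : ι × ι with p.1 < p.2, A (r p.1) (r p.2) := by
    rw [pairCount, ← filter_filter, sum_boole]
  have expect_A (e : T) : 𝔼 f, A e f = pairDegree T S e / #T := by
    rw [Fintype.expect_eq_sum_div_card, Fintype.card_coe,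
      sum_coe_sort T fun f => if s((e : α), f) ∈ S then (1 : ℝ) else 0, sum_boole, pairDegree]
  have expect_expect_A : 𝔼 e, 𝔼 f, A e f = (∑ e ∈ T, pairDegree T S e : ℕ) / #T ^ 2 := by
    simp only [expect_A]
    rw [Fintype.expect_eq_sum_div_card, Fintype.card_coe, ← sum_div,
      sum_coe_sort T fun e => (pairDegree T S e : ℝ), div_div, sq, Nat.cast_sum]
  have expect_sq_expect_A :
      𝔼 e, (𝔼 f, A e f) ^ 2 = (∑ e ∈ T, pairDegree T S e ^ 2 : ℕ) / #T ^ 3 := by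
    simp only [expect_A, div_pow]
    rw [Fintype.expect_eq_sum_div_card, Fintype.card_coe, ← sum_div,
      sum_coe_sort T fun e => (pairDegree T S e : ℝ) ^ 2, div_div, ← pow_succ]
    push_cast
    rfl
  have A_symm (e f : T) : A e f = A f e := by simp only [A, Sym2.eq_swap]
  have A_nonneg (e f : T) : 0 ≤ A e f := A_sq e f ▸ sq_nonneg _
  simpa only [A_sq, expect_expect_A, expect_sq_expect_A, pairCount_eq] using
    uniformVariance_sum_lt_pairs_le (ι := ι) A_symm A_nonneg

end PairCount

theorem two_mul_choose_two (n : ℕ) : 2 * n.choose 2 = n * (n - 1) := by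
  rw [Nat.choose_two_right, Nat.mul_div_cancel' (Nat.even_mul_pred_self n).two_dvd]

theorem sum_mul_pred_sq_le {ι : Type*} [Fintype ι] (n : ι → ℕ) :
    (∑ i, n i * (n i - 1) ^ 2 : ℕ)
      ≤ (2 * ∑ i, (n i).choose 2 : ℕ) * √(2 * ∑ i, (n i).choose 2 : ℕ) := by
  simp only [mul_sum, two_mul_choose_two]
  have pred_le (i : ι) : ((n i - 1 : ℕ) : ℝ) ≤ √(∑ j, n j * (n j - 1) : ℕ) := by
    refine Real.le_sqrt_of_sq_le ?_
    have pred_sq_le : (n i - 1) ^ 2 ≤ n i * (n i - 1) := by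
      rw [sq]
      exact Nat.mul_le_mul_right _ (Nat.pred_le _)
    exact_mod_cast pred_sq_le.trans
      (single_le_sum (f := fun j => n j * (n j - 1)) (fun _ _ => Nat.zero_le _) (mem_univ i))
  calc ((∑ i, n i * (n i - 1) ^ 2 : ℕ) : ℝ)
      = ∑ i, (n i * (n i - 1) : ℕ) * ((n i - 1 : ℕ) : ℝ) := by
        push_cast
        exact sum_congr rfl fun i _ => by ring
    _ ≤ ∑ i, (n i * (n i - 1) : ℕ) * √(∑ j, n j * (n j - 1) : ℕ) := by
        gcongr with i
        exact pred_le i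
    _ = (∑ i, n i * (n i - 1) : ℕ) * √(∑ j, n j * (n j - 1) : ℕ) := by
        rw [← sum_mul, Nat.cast_sum]

section Graph

variable {V : Type*} [Fintype V] [DecidableEq V] (G : SimpleGraph V) [DecidableRel G.Adj]

theorem sum_edgeFinset_sum_toFinset {M : Type*} [AddCommMonoid M] (g : V → M) :
    ∑ e ∈ G.edgeFinset, ∑ v ∈ e.toFinset, g v = ∑ v, G.degree v • g v := by
  rw [sum_comm' (t' := univ) (s' := fun v => G.incidenceFinset v)]
  · simp only [sum_const, G.card_incidenceFinset_eq_degree]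
  · intro e v
    simp [SimpleGraph.incidenceFinset_eq_filter]

variable {S : Finset (Sym2 (Sym2 V))} (hS : ∀ w ∈ S, ¬ w.IsDiag ∧ ∃ v : V, ∀ e ∈ w, v ∈ e)
include hS

theorem pairDegree_edgeFinset_le {e : Sym2 V} (he : e ∈ G.edgeFinset) :
    pairDegree G.edgeFinset S e ≤ ∑ v ∈ e.toFinset, (G.degree v - 1) := by
  have subset_biUnion : {f ∈ G.edgeFinset | s(e, f) ∈ S}
      ⊆ e.toFinset.biUnion fun v => (G.incidenceFinset v).erase e := by
    intro f hf
    obtain ⟨hfG, hef⟩ := mem_filter.1 hf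
    obtain ⟨hne, v, hv⟩ := hS _ hef
    simp only [mem_biUnion, Sym2.mem_toFinset, mem_erase, G.incidenceFinset_eq_filter, mem_filter]
    exact ⟨v, hv e (Sym2.mem_mk_left e f), fun hfe => hne hfe.symm, hfG,
      hv f (Sym2.mem_mk_right e f)⟩
  have card_erase (v : V) (hv : v ∈ e.toFinset) :
      #((G.incidenceFinset v).erase e) = G.degree v - 1 := by
    rw [card_erase_of_mem, G.card_incidenceFinset_eq_degree]
    rw [G.incidenceFinset_eq_filter]
    exact mem_filter.2 ⟨he, Sym2.mem_toFinset.1 hv⟩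
  exact (card_le_card subset_biUnion).trans
    (card_biUnion_le.trans (sum_congr rfl card_erase).le)

theorem sum_pairDegree_edgeFinset_le :
    ∑ e ∈ G.edgeFinset, pairDegree G.edgeFinset S e ≤ 2 * ∑ v, (G.degree v).choose 2 := by
  calc ∑ e ∈ G.edgeFinset, pairDegree G.edgeFinset S e
      ≤ ∑ e ∈ G.edgeFinset, ∑ v ∈ e.toFinset, (G.degree v - 1) :=
        sum_le_sum fun _ he => pairDegree_edgeFinset_le G hS he
    _ = 2 * ∑ v, (G.degree v).choose 2 := by
        simp only [sum_edgeFinset_sum_toFinset, smul_eq_mul, mul_sum, two_mul_choose_two]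

theorem sum_pairDegree_edgeFinset_sq_le :
    ∑ e ∈ G.edgeFinset, pairDegree G.edgeFinset S e ^ 2
      ≤ 2 * ∑ v, G.degree v * (G.degree v - 1) ^ 2 := by
  have pairDegree_sq_le {e : Sym2 V} (he : e ∈ G.edgeFinset) :
      pairDegree G.edgeFinset S e ^ 2 ≤ 2 * ∑ v ∈ e.toFinset, (G.degree v - 1) ^ 2 :=
    calc pairDegree G.edgeFinset S e ^ 2 ≤ (∑ v ∈ e.toFinset, (G.degree v - 1)) ^ 2 :=
          Nat.pow_le_pow_left (pairDegree_edgeFinset_le G hS he) 2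
      _ ≤ #e.toFinset * ∑ v ∈ e.toFinset, (G.degree v - 1) ^ 2 := sq_sum_le_card_mul_sum_sq
      _ = 2 * ∑ v ∈ e.toFinset, (G.degree v - 1) ^ 2 := by
          rw [e.card_toFinset_of_not_isDiag (G.not_isDiag_of_mem_edgeFinset he)]
  calc ∑ e ∈ G.edgeFinset, pairDegree G.edgeFinset S e ^ 2
      ≤ ∑ e ∈ G.edgeFinset, 2 * ∑ v ∈ e.toFinset, (G.degree v - 1) ^ 2 :=
        sum_le_sum fun _ he => pairDegree_sq_le he
    _ = 2 * ∑ v, G.degree v * (G.degree v - 1) ^ 2 := by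
        rw [← mul_sum, sum_edgeFinset_sum_toFinset]
        simp only [smul_eq_mul]

theorem sum_pairDegree_edgeFinset_sq_le_sqrt_pow :
    (∑ e ∈ G.edgeFinset, pairDegree G.edgeFinset S e ^ 2 : ℕ)
      ≤ 6 * √(∑ v, (G.degree v).choose 2 : ℕ) ^ 3 := by
  set W := ∑ v, (G.degree v).choose 2
  have sqrt_two_le : √2 ≤ (3 / 2 : ℝ) := Real.sqrt_le_iff.2 (by norm_num)
  calc ((∑ e ∈ G.edgeFinset, pairDegree G.edgeFinset S e ^ 2 : ℕ) : ℝ)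
      ≤ 2 * (∑ v, G.degree v * (G.degree v - 1) ^ 2 : ℕ) := by
        exact_mod_cast sum_pairDegree_edgeFinset_sq_le G hS
    _ ≤ 2 * ((2 * W : ℕ) * √(2 * W : ℕ)) := by
        gcongr
        exact sum_mul_pred_sq_le fun v => G.degree v
    _ = 4 * √2 * √W ^ 3 := by
        rw [pow_succ, Real.sq_sqrt (Nat.cast_nonneg W)]
        push_cast
        rw [Real.sqrt_mul zero_le_two]
        ring
    _ ≤ 4 * (3 / 2) * √W ^ 3 := by gcongr
    _ = 6 * √W ^ 3 := by ring

end Graph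

theorem variance_wedge_count_bound_general
    {V : Type*} [Fintype V] [DecidableEq V] (G : SimpleGraph V) [DecidableRel G.Adj]
    (m W : ℕ) (hm : m = G.edgeFinset.card) (hm0 : 0 < m)
    (hW : W = ∑ v : V, (G.degree v).choose 2)
    (S : Finset (Sym2 (Sym2 V)))
    (hS : ∀ w ∈ S, ¬ w.IsDiag ∧ (∀ e ∈ w, e ∈ G.edgeFinset) ∧ ∃ v : V, ∀ e ∈ w, v ∈ e)
    (k : ℕ) (hk : (m : ℝ) ≤ k * √W) :
    uniformVariance (fun r : Fin k → G.edgeFinset => (pairCount S fun i => (r i : Sym2 V) : ℝ))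
      ≤ 8 * (k : ℝ) ^ 3 * (W : ℝ) ^ ((3 : ℝ) / 2) / (m : ℝ) ^ 3 := by
  have hm_pos : (0 : ℝ) < m := Nat.cast_pos.2 hm0
  have hS_share : ∀ w ∈ S, ¬ w.IsDiag ∧ ∃ v : V, ∀ e ∈ w, v ∈ e :=
    fun w hw => ⟨(hS w hw).1, (hS w hw).2.2⟩
  have sum_degree_le : ((∑ e ∈ G.edgeFinset, pairDegree G.edgeFinset S e : ℕ) : ℝ)
      ≤ 2 * √W ^ 2 := by
    rw [Real.sq_sqrt W.cast_nonneg, hW]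
    exact_mod_cast sum_pairDegree_edgeFinset_le G hS_share
  have sum_degree_sq_le : ((∑ e ∈ G.edgeFinset, pairDegree G.edgeFinset S e ^ 2 : ℕ) : ℝ)
      ≤ 6 * √W ^ 3 := hW ▸ sum_pairDegree_edgeFinset_sq_le_sqrt_pow G hS_share
  have one_le : 1 ≤ k * √W / m := (one_le_div hm_pos).2 hk
  calc uniformVariance (fun r : Fin k → G.edgeFinset => (pairCount S fun i => (r i : Sym2 V) : ℝ))
      ≤ k ^ 2 * ((∑ e ∈ G.edgeFinset, pairDegree G.edgeFinset S e : ℕ) / m ^ 2)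
        + k ^ 3 * ((∑ e ∈ G.edgeFinset, pairDegree G.edgeFinset S e ^ 2 : ℕ) / m ^ 3) := by
        simpa [hm] using uniformVariance_pairCount_le (ι := Fin k) (card_pos.1 (hm ▸ hm0)) S
    _ ≤ k ^ 2 * (2 * √W ^ 2 / m ^ 2) + k ^ 3 * (6 * √W ^ 3 / m ^ 3) := by gcongr
    _ = 2 * (k * √W / m) ^ 2 + 6 * (k * √W / m) ^ 3 := by ring
    _ ≤ 2 * (k * √W / m) ^ 3 + 6 * (k * √W / m) ^ 3 := by
        gcongr 2 * ?_ + _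
        exact pow_le_pow_right₀ one_le (by norm_num)
    _ = 8 * (k : ℝ) ^ 3 * (W : ℝ) ^ ((3 : ℝ) / 2) / (m : ℝ) ^ 3 := by
        rw [Real.rpow_div_two_eq_sqrt _ W.cast_nonneg, Real.rpow_ofNat]
        ring

/-- Variance bound: if `W ≥ m` and `k ≥ m/√W`, the number `X` of wedges of a fixed set
`S` formed by `k` i.i.d. uniform random edges satisfies `Var[X] ≤ 18 k³ W^{3/2}/m³`. -/
theorem variance_wedge_count_bound
    {V : Type*} [Fintype V] [DecidableEq V] (G : SimpleGraph V) [DecidableRel G.Adj]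
    (m W : ℕ) (hm : m = G.edgeFinset.card) (hm0 : 0 < m)
    (hW : W = ∑ v : V, (G.degree v).choose 2) (hWm : m ≤ W)
    (S : Finset (Sym2 (Sym2 V)))
    (hS : ∀ w ∈ S, ¬ w.IsDiag ∧ (∀ e ∈ w, e ∈ G.edgeFinset) ∧ ∃ v : V, ∀ e ∈ w, v ∈ e)
    (k : ℕ) (hk : (m : ℝ) / Real.sqrt W ≤ (k : ℝ)) :
    (∑ r : Fin k → G.edgeFinset,
        (((Finset.univ.filter (fun p : Fin k × Fin k =>
            p.1 < p.2 ∧ s((r p.1 : Sym2 V), (r p.2 : Sym2 V)) ∈ S)).card : ℝ)) ^ 2)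
          / (m : ℝ) ^ k
      - ((∑ r : Fin k → G.edgeFinset,
          ((Finset.univ.filter (fun p : Fin k × Fin k =>
            p.1 < p.2 ∧ s((r p.1 : Sym2 V), (r p.2 : Sym2 V)) ∈ S)).card : ℝ))
          / (m : ℝ) ^ k) ^ 2
      ≤ 18 * (k : ℝ) ^ 3 * (W : ℝ) ^ ((3 : ℝ) / 2) / (m : ℝ) ^ 3 := by
  have sqrt_pos : 0 < √(W : ℝ) := Real.sqrt_pos.2 (Nat.cast_pos.2 (hm0.trans_le hWm))
  have h := variance_wedge_count_bound_general G m W hm hm0 hW S hS k ((div_le_iff₀ sqrt_pos).1 hk)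
  rw [uniformVariance_eq_sum_div_card, Fintype.card_fun, Fintype.card_fin, Fintype.card_coe, ← hm,
    Nat.cast_pow] at h
  exact h.trans (by gcongr; norm_num)
end

section
/- Let X be a random variable counting wedges of a fixed set S formed by s i.i.d. uniform random edges of a graph G with m edges and W ≥ m wedges. For γ > 0, if s ≥ c′m/(γ³√W) for a sufficiently large absolute constant c′, then with probability at least 1 − γ, |X − E[X]| ≤ (γW/|S|)·E[X]. -/
open Finset Classical

/-!
Take as vertices the edges of `G` and join two of them when they form a wedge of `S`. In this
graph the count `X` is the U-statistic whose kernel is the adjacency matrix, so it is handled by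
its Hoeffding decomposition: `X - 𝔼 X` is `k - 1` times a sum of independent centred terms plus a
degenerate U-statistic. The two parts are orthogonal and their variances are computed exactly,
which yields `Var X ≤ k(k-1)² · 2|S|Δ/m³ + (k choose 2) · 2|S|/m²`, where `Δ` is the maximum
degree. An edge `uv` of `G` lies in at most `(deg u - 1) + (deg v - 1)` wedges and
`(d - 1)² ≤ 2 (d choose 2)`, so `Δ ≤ 2√W`. Since `|S| ≤ W` and `m ≤ (k - 1)√W`, the linear part
dominates, and `k√W ≥ 5m/γ³` is exactly what Chebyshev's inequality needs at the deviation
`(γW/|S|) 𝔼 X = γW k(k-1)/m²`. For `γ ≥ 1` there is nothing to prove.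
-/

open scoped BigOperators

section Expectation

variable {α ι E : Type*} [Fintype α] [Fintype ι] [DecidableEq ι] [Fintype E]

lemma one_sub_expect_sq_div_le_card_abs_le [Nonempty α] (Z : α → ℝ) {h : ℝ} (hh : 0 < h) :
    1 - (𝔼 ω, Z ω ^ 2) / h ^ 2 ≤ (#{ω | |Z ω| ≤ h} : ℝ) / Fintype.card α :=
  calc 1 - (𝔼 ω, Z ω ^ 2) / h ^ 2
      = 𝔼 ω, (1 - Z ω ^ 2 / h ^ 2) := by
        rw [expect_sub_distrib, Fintype.expect_one, expect_div]
    _ ≤ 𝔼 ω, if |Z ω| ≤ h then (1 : ℝ) else 0 := expect_le_expect fun ω _ ↦ by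
        split_ifs with hω
        · exact sub_le_self _ (by positivity)
        · rw [sub_nonpos, one_le_div (by positivity), ← sq_abs (Z ω)]
          gcongr
          exact (not_le.1 hω).le
    _ = (#{ω | |Z ω| ≤ h} : ℝ) / Fintype.card α := by
        rw [Fintype.expect_eq_sum_div_card, sum_boole]

lemma expect_sub_expect_eq_zero (φ : α → ℝ) : 𝔼 a, (φ a - 𝔼 b, φ b) = 0 := by
  cases isEmpty_or_nonempty α
  · simp
  · rw [expect_sub_distrib, Fintype.expect_const, sub_self]

lemma expect_sub_expect_sq_le (φ : α → ℝ) : 𝔼 a, (φ a - 𝔼 b, φ b) ^ 2 ≤ 𝔼 a, φ a ^ 2 := by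
  have hsplit (a : α) : (φ a - 𝔼 b, φ b) ^ 2
      = φ a ^ 2 - ((φ a - 𝔼 b, φ b) * (2 * 𝔼 b, φ b) + (𝔼 b, φ b) ^ 2) := by ring
  simp_rw [hsplit, expect_sub_distrib, expect_add_distrib, ← expect_mul,
    expect_sub_expect_eq_zero, zero_mul, zero_add]
  exact sub_le_self _ (expect_nonneg fun _ _ ↦ sq_nonneg _)

lemma expect_expect_update_s11 (i : ι) (φ : (ι → E) → ℝ) :
    𝔼 r : ι → E, 𝔼 a, φ (Function.update r i a) = 𝔼 r, φ r := by
  have hswap : 𝔼 x : (ι → E) × E, φ (Function.update x.1 i x.2) = 𝔼 x : (ι → E) × E, φ x.1 := by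
    refine expect_nbij' (fun x ↦ (Function.update x.1 i x.2, x.1 i))
      (fun x ↦ (Function.update x.1 i x.2, x.1 i)) ?_ ?_ ?_ ?_ ?_ <;> simp
  rw [← univ_product_univ, expect_product, expect_product] at hswap
  refine hswap.trans (expect_congr rfl fun r _ ↦ ?_)
  exact expect_const (s := (univ : Finset E)) ⟨r i, mem_univ _⟩ (φ r)

lemma expect_eq_zero_of_expect_update_eq_zero {φ : (ι → E) → ℝ} (i : ι)
    (hφ : ∀ r, 𝔼 a, φ (Function.update r i a) = 0) : 𝔼 r, φ r = 0 := by
  rw [← expect_expect_update_s11 i, expect_eq_zero fun r _ ↦ hφ r]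

lemma expect_pi_apply (i : ι) (g : E → ℝ) : 𝔼 r : ι → E, g (r i) = 𝔼 a, g a := by
  rw [← expect_expect_update_s11 i]
  cases isEmpty_or_nonempty E <;> simp

lemma expect_pi_apply_apply {i j : ι} (hij : i ≠ j) (f : E → E → ℝ) :
    𝔼 r : ι → E, f (r i) (r j) = 𝔼 a, 𝔼 b, f a b :=
  calc 𝔼 r : ι → E, f (r i) (r j)
      = 𝔼 r : ι → E, 𝔼 a, f a (r j) := by
        rw [← expect_expect_update_s11 i]
        simp [hij.symm]
    _ = 𝔼 b, 𝔼 a, f a b := expect_pi_apply j fun b ↦ 𝔼 a, f a b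
    _ = 𝔼 a, 𝔼 b, f a b := expect_comm _ _ _

lemma expect_sum_apply_sq {g : E → ℝ} (hg : 𝔼 a, g a = 0) :
    𝔼 r : ι → E, (∑ i, g (r i)) ^ 2 = Fintype.card ι * 𝔼 a, g a ^ 2 := by
  have horth (i j : ι) :
      𝔼 r : ι → E, g (r i) * g (r j) = if i = j then 𝔼 a, g a ^ 2 else 0 := by
    split_ifs with hij
    · subst hij
      simp_rw [← sq]
      exact expect_pi_apply i (fun a ↦ g a ^ 2)
    · refine expect_eq_zero_of_expect_update_eq_zero i fun r ↦ ?_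
      simp [Ne.symm hij, ← expect_mul, hg]
  simp_rw [sq (Finset.sum _ _), sum_mul_sum, expect_sum_comm, horth]
  simp

end Expectation

section PairSum

variable {ι E : Type*} [Fintype ι] [LinearOrder ι]

lemma sum_filter_fst_lt_snd_add (x : ι → ℝ) :
    ∑ p : ι × ι with p.1 < p.2, (x p.1 + x p.2) = (Fintype.card ι - 1) * ∑ i, x i := by
  have hfst : ∑ p : ι × ι with p.1 < p.2, x p.1 = ∑ i, ∑ j, if i < j then x i else 0 := by
    rw [sum_filter, Fintype.sum_prod_type]
  have hsnd : ∑ p : ι × ι with p.1 < p.2, x p.2 = ∑ i, ∑ j, if j < i then x i else 0 := by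
    rw [sum_filter, Fintype.sum_prod_type_right]
  have hne (i j : ι) : (if i < j then x i else 0) + (if j < i then x i else 0)
      = x i - if i = j then x i else 0 := by
    rcases lt_trichotomy i j with h | rfl | h
    · simp [h, h.not_gt, h.ne]
    · simp
    · simp [h, h.not_gt, h.ne']
  simp_rw [sum_add_distrib, hfst, hsnd, ← sum_add_distrib, hne, sum_sub_distrib, sum_ite_eq]
  simp [mul_sum, sub_mul]

lemma card_filter_fst_lt_snd : (#{p : ι × ι | p.1 < p.2} : ℝ) = (Fintype.card ι).choose 2 := by
  have h := sum_filter_fst_lt_snd_add (fun _ : ι ↦ (1 : ℝ))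
  simp only [sum_const, nsmul_eq_mul, card_univ, mul_one] at h
  rw [Nat.cast_choose_two]
  linarith

/-- The (unnormalised) U-statistic of order two with kernel `f`, evaluated at the sample `r`. -/
def pairSum (f : E → E → ℝ) (r : ι → E) : ℝ :=
  ∑ p : ι × ι with p.1 < p.2, f (r p.1) (r p.2)

variable [Fintype E]

section Degenerate

variable {h : E → E → ℝ} (hl : ∀ b, 𝔼 a, h a b = 0) (hr : ∀ a, 𝔼 b, h a b = 0)
include hl hr

lemma expect_sum_apply_mul_pairSum (g : E → ℝ) :
    𝔼 r : ι → E, (∑ i, g (r i)) * pairSum h r = 0 := by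
  simp_rw [pairSum, sum_mul_sum, expect_sum_comm]
  refine sum_eq_zero fun i _ ↦ sum_eq_zero fun p hp ↦ ?_
  have hlt : p.1 < p.2 := (mem_filter.1 hp).2
  by_cases hi : i = p.1
  · refine expect_eq_zero_of_expect_update_eq_zero p.2 fun r ↦ ?_
    simp [hi, hlt.ne, ← mul_expect, hr]
  · refine expect_eq_zero_of_expect_update_eq_zero p.1 fun r ↦ ?_
    simp [hi, hlt.ne', ← mul_expect, hl]

lemma expect_pairSum_sq :
    𝔼 r : ι → E, pairSum h r ^ 2 = (Fintype.card ι).choose 2 * 𝔼 a, 𝔼 b, h a b ^ 2 := by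
  have horth (p p' : ι × ι) (hp : p.1 < p.2) (hp' : p'.1 < p'.2) :
      𝔼 r : ι → E, h (r p.1) (r p.2) * h (r p'.1) (r p'.2)
        = if p = p' then 𝔼 a, 𝔼 b, h a b ^ 2 else 0 := by
    split_ifs with hpp'
    · subst hpp'
      simp_rw [← sq]
      exact expect_pi_apply_apply hp.ne fun a b ↦ h a b ^ 2
    · -- One index occurs in only one of the two pairs; averaging over its coordinate gives `0`.
      have hfresh : (p.1 ≠ p'.1 ∧ p.1 ≠ p'.2) ∨ (p.2 ≠ p'.1 ∧ p.2 ≠ p'.2) := by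
        rw [Prod.ext_iff] at hpp'
        grind
      rcases hfresh with ⟨h₁, h₂⟩ | ⟨h₁, h₂⟩
      · refine expect_eq_zero_of_expect_update_eq_zero p.1 fun r ↦ ?_
        simp [h₁.symm, h₂.symm, hp.ne', ← expect_mul, hl]
      · refine expect_eq_zero_of_expect_update_eq_zero p.2 fun r ↦ ?_
        simp [h₁.symm, h₂.symm, hp.ne, ← expect_mul, hr]
  simp_rw [pairSum, sq (Finset.sum _ _), sum_mul_sum, expect_sum_comm]
  rw [← card_filter_fst_lt_snd, ← nsmul_eq_mul, ← sum_const]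
  refine sum_congr rfl fun p hp ↦ ?_
  rw [sum_congr rfl fun p' hp' ↦ horth p p' (mem_filter.1 hp).2 (mem_filter.1 hp').2,
    sum_ite_eq, if_pos hp]

end Degenerate

/-- The mean of a kernel `f` at two independent uniform points. -/
noncomputable def kernelMean (f : E → E → ℝ) : ℝ := 𝔼 a, 𝔼 b, f a b

/-- The first-order term of the Hoeffding decomposition of a symmetric kernel `f`. -/
noncomputable def hoeffdingLinear (f : E → E → ℝ) (a : E) : ℝ := 𝔼 b, f a b - kernelMean f

/-- The second-order term of the Hoeffding decomposition of a kernel `f`, whose mean in either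
variable vanishes. It is encoded as `f` centred first in its first variable and then in its
second. -/
noncomputable def hoeffdingDegenerate (f : E → E → ℝ) (a b : E) : ℝ :=
  (f a b - 𝔼 c, f c b) - 𝔼 d, (f a d - 𝔼 c, f c d)

lemma expect_hoeffdingLinear (f : E → E → ℝ) : 𝔼 a, hoeffdingLinear f a = 0 :=
  expect_sub_expect_eq_zero fun a ↦ 𝔼 b, f a b

lemma expect_hoeffdingDegenerate_right (f : E → E → ℝ) (a : E) :
    𝔼 b, hoeffdingDegenerate f a b = 0 :=
  expect_sub_expect_eq_zero fun b ↦ f a b - 𝔼 c, f c b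

lemma expect_hoeffdingDegenerate_left (f : E → E → ℝ) (b : E) :
    𝔼 a, hoeffdingDegenerate f a b = 0 := by
  simp only [hoeffdingDegenerate]
  rw [expect_sub_distrib, expect_sub_expect_eq_zero, expect_comm]
  simp [expect_sub_expect_eq_zero]

lemma expect_hoeffdingLinear_sq_le (f : E → E → ℝ) :
    𝔼 a, hoeffdingLinear f a ^ 2 ≤ 𝔼 a, (𝔼 b, f a b) ^ 2 :=
  expect_sub_expect_sq_le fun a ↦ 𝔼 b, f a b

lemma expect_hoeffdingDegenerate_sq_le (f : E → E → ℝ) :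
    𝔼 a, 𝔼 b, hoeffdingDegenerate f a b ^ 2 ≤ 𝔼 a, 𝔼 b, f a b ^ 2 :=
  calc 𝔼 a, 𝔼 b, hoeffdingDegenerate f a b ^ 2
      ≤ 𝔼 a, 𝔼 b, (f a b - 𝔼 c, f c b) ^ 2 :=
        expect_le_expect fun a _ ↦ expect_sub_expect_sq_le fun b ↦ f a b - 𝔼 c, f c b
    _ = 𝔼 b, 𝔼 a, (f a b - 𝔼 c, f c b) ^ 2 := expect_comm _ _ _
    _ ≤ 𝔼 b, 𝔼 a, f a b ^ 2 :=
        expect_le_expect fun b _ ↦ expect_sub_expect_sq_le fun a ↦ f a b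
    _ = 𝔼 a, 𝔼 b, f a b ^ 2 := expect_comm _ _ _

lemma hoeffding_decomposition {f : E → E → ℝ} (hf : ∀ a b, f a b = f b a) (a b : E) :
    f a b = kernelMean f + (hoeffdingLinear f a + hoeffdingLinear f b)
      + hoeffdingDegenerate f a b := by
  have hcol : 𝔼 c, f c b = 𝔼 c, f b c := expect_congr rfl fun c _ ↦ hf c b
  have hmean : 𝔼 d, 𝔼 c, f c d = kernelMean f := expect_comm _ _ _
  simp only [hoeffdingLinear, hoeffdingDegenerate, expect_sub_distrib, hcol, hmean]
  ring

lemma pairSum_sub_mean {f : E → E → ℝ} (hf : ∀ a b, f a b = f b a) (r : ι → E) :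
    pairSum f r - (Fintype.card ι).choose 2 * kernelMean f
      = (Fintype.card ι - 1) * ∑ i, hoeffdingLinear f (r i)
        + pairSum (hoeffdingDegenerate f) r := by
  rw [pairSum, sum_congr rfl fun p _ ↦ hoeffding_decomposition hf (r p.1) (r p.2),
    sum_add_distrib, sum_add_distrib,
    sum_filter_fst_lt_snd_add fun i ↦ hoeffdingLinear f (r i), sum_const, nsmul_eq_mul,
    card_filter_fst_lt_snd, pairSum]
  ring

theorem expect_pairSum_sub_mean_sq {f : E → E → ℝ} (hf : ∀ a b, f a b = f b a) :
    𝔼 r : ι → E, (pairSum f r - (Fintype.card ι).choose 2 * kernelMean f) ^ 2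
      = Fintype.card ι * (Fintype.card ι - 1) ^ 2 * 𝔼 a, hoeffdingLinear f a ^ 2
        + (Fintype.card ι).choose 2 * 𝔼 a, 𝔼 b, hoeffdingDegenerate f a b ^ 2 := by
  have hcross := expect_sum_apply_mul_pairSum (ι := ι) (expect_hoeffdingDegenerate_left f)
    (expect_hoeffdingDegenerate_right f) (hoeffdingLinear f)
  simp_rw [pairSum_sub_mean hf, add_sq, mul_pow, expect_add_distrib, ← mul_expect,
    expect_sum_apply_sq (expect_hoeffdingLinear f),
    expect_pairSum_sq (expect_hoeffdingDegenerate_left f) (expect_hoeffdingDegenerate_right f),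
    mul_assoc, ← mul_expect, hcross]
  ring

theorem expect_pairSum_sub_mean_sq_le {f : E → E → ℝ} (hf : ∀ a b, f a b = f b a) :
    𝔼 r : ι → E, (pairSum f r - (Fintype.card ι).choose 2 * kernelMean f) ^ 2
      ≤ Fintype.card ι * (Fintype.card ι - 1) ^ 2 * 𝔼 a, (𝔼 b, f a b) ^ 2
        + (Fintype.card ι).choose 2 * 𝔼 a, 𝔼 b, f a b ^ 2 := by
  rw [expect_pairSum_sub_mean_sq hf]
  gcongr _ * ?_ + _ * ?_
  · exact expect_hoeffdingLinear_sq_le f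
  · exact expect_hoeffdingDegenerate_sq_le f

end PairSum

section AdjacentPairs

variable {ι E : Type*} [Fintype ι] [LinearOrder ι] (H : SimpleGraph E) [DecidableRel H.Adj]

lemma pairSum_adjMatrix (r : ι → E) :
    pairSum (H.adjMatrix ℝ) r = #{p : ι × ι | p.1 < p.2 ∧ H.Adj (r p.1) (r p.2)} := by
  simp_rw [pairSum, SimpleGraph.adjMatrix_apply, sum_boole, filter_filter]

variable [Fintype E]

lemma expect_adjMatrix (a : E) : 𝔼 b, H.adjMatrix ℝ a b = H.degree a / Fintype.card E := by
  simp_rw [Fintype.expect_eq_sum_div_card, SimpleGraph.adjMatrix_apply, sum_boole,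
    ← SimpleGraph.neighborFinset_eq_filter, SimpleGraph.card_neighborFinset_eq_degree]

lemma kernelMean_adjMatrix :
    kernelMean (H.adjMatrix ℝ) = 2 * #H.edgeFinset / (Fintype.card E : ℝ) ^ 2 := by
  simp_rw [kernelMean, expect_adjMatrix]
  rw [← expect_div, Fintype.expect_eq_sum_div_card, div_div, ← sq, ← Nat.cast_sum,
    SimpleGraph.sum_degrees_eq_twice_card_edges]
  push_cast
  rfl

lemma expect_degree_div_card_sq_le {Δ : ℝ} (hΔ : ∀ a, (H.degree a : ℝ) ≤ Δ) :
    𝔼 a, (H.degree a / Fintype.card E : ℝ) ^ 2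
      ≤ 2 * #H.edgeFinset * Δ / (Fintype.card E : ℝ) ^ 3 :=
  calc 𝔼 a, (H.degree a / Fintype.card E : ℝ) ^ 2
      = (∑ a, (H.degree a : ℝ) * H.degree a) / (Fintype.card E : ℝ) ^ 3 := by
        simp_rw [div_pow, ← expect_div, Fintype.expect_eq_sum_div_card, div_div, ← sq, ← pow_succ']
    _ ≤ (∑ a, (H.degree a : ℝ) * Δ) / (Fintype.card E : ℝ) ^ 3 := by
        gcongr
        exact hΔ _
    _ = 2 * #H.edgeFinset * Δ / (Fintype.card E : ℝ) ^ 3 := by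
        rw [← sum_mul, ← Nat.cast_sum, SimpleGraph.sum_degrees_eq_twice_card_edges]
        push_cast
        rfl

theorem expect_card_adj_pairs_sub_mean_sq_le {Δ : ℝ}
    (hΔ : ∀ a, (H.degree a : ℝ) ≤ Δ) :
    𝔼 r : ι → E, ((#{p : ι × ι | p.1 < p.2 ∧ H.Adj (r p.1) (r p.2)} : ℝ)
        - (Fintype.card ι).choose 2 * (2 * #H.edgeFinset / (Fintype.card E : ℝ) ^ 2)) ^ 2
      ≤ Fintype.card ι * (Fintype.card ι - 1) ^ 2
          * (2 * #H.edgeFinset * Δ / (Fintype.card E : ℝ) ^ 3)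
        + (Fintype.card ι).choose 2 * (2 * #H.edgeFinset / (Fintype.card E : ℝ) ^ 2) := by
  have hsq : 𝔼 a, 𝔼 b, H.adjMatrix ℝ a b ^ 2 = kernelMean (H.adjMatrix ℝ) := by
    simp [kernelMean, SimpleGraph.adjMatrix_apply]
  have hvar := expect_pairSum_sub_mean_sq_le (ι := ι) (f := H.adjMatrix ℝ)
    fun a b ↦ H.isSymm_adjMatrix.apply b a
  simp_rw [hsq, expect_adjMatrix, kernelMean_adjMatrix, pairSum_adjMatrix] at hvar
  refine hvar.trans ?_
  gcongr
  exact expect_degree_div_card_sq_le H hΔ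

end AdjacentPairs

section Wedges

variable {V : Type*} {G : SimpleGraph V}

/-- A wedge of `G`, encoded as the unordered pair of its two edges. -/
def IsWedge (G : SimpleGraph V) (w : Sym2 (Sym2 V)) : Prop :=
  ¬ w.IsDiag ∧ (∀ e ∈ w, e ∈ G.edgeSet) ∧ ∃ v, ∀ e ∈ w, v ∈ e

lemma isWedge_mk {e e' : Sym2 V} :
    IsWedge G s(e, e') ↔ e ≠ e' ∧ (e ∈ G.edgeSet ∧ e' ∈ G.edgeSet) ∧ ∃ v, v ∈ e ∧ v ∈ e' := by
  simp [IsWedge]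

variable [Fintype V] [DecidableRel G.Adj]

lemma sq_sub_one_le_two_mul_choose_two (d : ℕ) : (d - 1) ^ 2 ≤ 2 * d.choose 2 := by
  rw [Nat.choose_two_right, Nat.mul_div_cancel' (Nat.even_mul_pred_self d).two_dvd, sq]
  gcongr
  exact Nat.sub_le d 1

variable (G) in
lemma sum_choose_two_degree_le :
    ∑ v, (G.degree v).choose 2 ≤ #G.edgeFinset ^ 2 := by
  have hchoose (v : V) : 2 * (G.degree v).choose 2 ≤ G.degree v * #G.edgeFinset := by
    rw [Nat.choose_two_right, Nat.mul_div_cancel' (Nat.even_mul_pred_self _).two_dvd]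
    gcongr
    exact (Nat.sub_le _ 1).trans (G.degree_le_card_edgeFinset v)
  have hsum := sum_le_sum fun v (_ : v ∈ univ) ↦ hchoose v
  rw [← mul_sum, ← sum_mul, G.sum_degrees_eq_twice_card_edges] at hsum
  linarith

/-- The graph whose vertices are the edges of `G` and whose edges are the pairs in `S`. -/
def wedgeGraph (G : SimpleGraph V) [Fintype G.edgeSet] (S : Finset (Sym2 (Sym2 V))) :
    SimpleGraph G.edgeFinset :=
  (SimpleGraph.fromEdgeSet (S : Set (Sym2 (Sym2 V)))).comap Subtype.val

variable {S : Finset (Sym2 (Sym2 V))} (hS : ∀ w ∈ S, IsWedge G w)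

include hS

lemma wedgeGraph_adj {a b : G.edgeFinset} :
    (wedgeGraph G S).Adj a b ↔ s((a : Sym2 V), (b : Sym2 V)) ∈ S := by
  have hne (h : s((a : Sym2 V), (b : Sym2 V)) ∈ S) : (a : Sym2 V) ≠ b := (hS _ h).1
  simpa [wedgeGraph] using hne

lemma card_edgeFinset_wedgeGraph : #(wedgeGraph G S).edgeFinset = #S := by
  have hmap : (wedgeGraph G S).edgeFinset.map (Function.Embedding.subtype _).sym2Map = S := by
    ext w
    simp only [mem_map, SimpleGraph.mem_edgeFinset]
    constructor
    · rintro ⟨⟨a, b⟩, hab, rfl⟩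
      exact (wedgeGraph_adj hS).1 hab
    · induction w with | _ e e' =>
      intro hw
      obtain ⟨-, ⟨he, he'⟩, -⟩ := isWedge_mk.1 (hS _ hw)
      rw [← SimpleGraph.mem_edgeFinset] at he he'
      exact ⟨s(⟨e, he⟩, ⟨e', he'⟩), (wedgeGraph_adj hS).2 hw, rfl⟩
  exact (card_map _).symm.trans (congrArg card hmap)

lemma card_le_sum_choose_two_degree : #S ≤ ∑ v, (G.degree v).choose 2 := by
  have hsub : S ⊆ univ.biUnion fun v ↦ (G.incidenceFinset v).offDiag.image Sym2.mk.uncurry := by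
    intro w hw
    induction w with | _ e e' =>
    obtain ⟨hne, ⟨he, he'⟩, v, hve, hve'⟩ := isWedge_mk.1 (hS _ hw)
    refine mem_biUnion.2 ⟨v, mem_univ v, mem_image.2 ⟨(e, e'), mem_offDiag.2 ⟨?_, ?_, hne⟩, rfl⟩⟩
    · exact (G.mem_incidenceFinset v e).2 ⟨he, hve⟩
    · exact (G.mem_incidenceFinset v e').2 ⟨he', hve'⟩
  refine (card_le_card hsub).trans (card_biUnion_le.trans_eq (sum_congr rfl fun v _ ↦ ?_))
  rw [Sym2.card_image_offDiag, G.card_incidenceFinset_eq_degree]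

lemma degree_wedgeGraph_le {u v : V} (huv : s(u, v) ∈ G.edgeFinset) :
    (wedgeGraph G S).degree ⟨s(u, v), huv⟩ ≤ (G.degree u - 1) + (G.degree v - 1) := by
  have hsub : ((wedgeGraph G S).neighborFinset ⟨s(u, v), huv⟩).map (Function.Embedding.subtype _)
      ⊆ (G.incidenceFinset u).erase s(u, v) ∪ (G.incidenceFinset v).erase s(u, v) := by
    intro e he
    obtain ⟨a, ha, rfl⟩ := mem_map.1 he
    rw [SimpleGraph.mem_neighborFinset, wedgeGraph_adj hS] at ha
    obtain ⟨hne, ⟨-, hedge⟩, x, hx, hxa⟩ := isWedge_mk.1 (hS _ ha)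
    rcases Sym2.mem_iff.1 hx with rfl | rfl
    · exact mem_union_left _ (mem_erase.2 ⟨hne.symm, (G.mem_incidenceFinset _ _).2 ⟨hedge, hxa⟩⟩)
    · exact mem_union_right _ (mem_erase.2 ⟨hne.symm, (G.mem_incidenceFinset _ _).2 ⟨hedge, hxa⟩⟩)
  have hcard {x : V} (hx : x ∈ s(u, v)) :
      #((G.incidenceFinset x).erase s(u, v)) = G.degree x - 1 := by
    rw [card_erase_of_mem, G.card_incidenceFinset_eq_degree]
    exact (G.mem_incidenceFinset _ _).2 ⟨G.mem_edgeFinset.1 huv, hx⟩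
  rw [← hcard (Sym2.mem_mk_left u v), ← hcard (Sym2.mem_mk_right u v),
    ← SimpleGraph.card_neighborFinset_eq_degree, ← card_map (Function.Embedding.subtype _)]
  exact (card_le_card hsub).trans (card_union_le _ _)

lemma degree_wedgeGraph_le_two_mul_sqrt (a : G.edgeFinset) :
    ((wedgeGraph G S).degree a : ℝ) ≤ 2 * √(∑ v, (G.degree v).choose 2 : ℕ) := by
  obtain ⟨e, huv⟩ := a
  induction e with | _ u v =>
  have hne : u ≠ v := (G.mem_edgeFinset.1 huv : G.Adj u v).ne
  have hpair : (G.degree u).choose 2 + (G.degree v).choose 2 ≤ ∑ x, (G.degree x).choose 2 :=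
    add_le_sum (f := fun x ↦ (G.degree x).choose 2) (fun _ _ ↦ Nat.zero_le _)
      (mem_univ u) (mem_univ v) hne
  have hsq : (wedgeGraph G S).degree ⟨s(u, v), huv⟩ ^ 2 ≤ 2 ^ 2 * ∑ x, (G.degree x).choose 2 :=
    calc (wedgeGraph G S).degree ⟨s(u, v), huv⟩ ^ 2
        ≤ ((G.degree u - 1) + (G.degree v - 1)) ^ 2 := by
          gcongr
          exact degree_wedgeGraph_le hS huv
      _ ≤ 2 * ((G.degree u - 1) ^ 2 + (G.degree v - 1) ^ 2) := add_sq_le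
      _ ≤ 2 * (2 * (G.degree u).choose 2 + 2 * (G.degree v).choose 2) := by
          gcongr <;> exact sq_sub_one_le_two_mul_choose_two _
      _ ≤ 2 ^ 2 * ∑ x, (G.degree x).choose 2 := by linarith
  rw [← pow_le_pow_iff_left₀ (by positivity) (by positivity) two_ne_zero, mul_pow,
    Real.sq_sqrt (by positivity)]
  exact_mod_cast hsq

end Wedges

section Threshold

variable {m w e γ k : ℝ} (hw : 0 < w) (hwm : w ≤ m) (hγ : 0 < γ) (hγ1 : γ ≤ 1)
  (hk : 5 * m / (γ ^ 3 * w) ≤ k)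
include hw hwm hγ hγ1 hk

lemma le_sub_one_mul_of_five_mul_div_le : m ≤ (k - 1) * w := by
  have hm : 0 < m := hw.trans_le hwm
  have hk0 : 0 < k := (by positivity : 0 < 5 * m / (γ ^ 3 * w)).trans_le hk
  rw [div_le_iff₀ (by positivity)] at hk
  have hkw : 5 * m ≤ k * w := by
    refine hk.trans ?_
    gcongr
    exact mul_le_of_le_one_left hw.le (pow_le_one₀ hγ.le hγ1)
  linarith

lemma one_lt_of_five_mul_div_le : 1 < k :=
  sub_pos.1 <| pos_of_mul_pos_left
    (hw.trans_le <| hwm.trans <| le_sub_one_mul_of_five_mul_div_le hw hwm hγ hγ1 hk) hw.le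

lemma variance_le_mul_sq_of_five_mul_div_le (he : e ≤ w ^ 2) :
    k * (k - 1) ^ 2 * (2 * e * (2 * w) / m ^ 3) + k * (k - 1) / 2 * (2 * e / m ^ 2)
      ≤ γ * (γ * w ^ 2 * (k * (k - 1)) / m ^ 2) ^ 2 := by
  have hm : 0 < m := hw.trans_le hwm
  have hmk := le_sub_one_mul_of_five_mul_div_le hw hwm hγ hγ1 hk
  have hk1 : 0 < k - 1 := sub_pos.2 (one_lt_of_five_mul_div_le hw hwm hγ hγ1 hk)
  have hk0 : 0 < k := by linarith
  rw [div_le_iff₀ (by positivity)] at hk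
  calc k * (k - 1) ^ 2 * (2 * e * (2 * w) / m ^ 3) + k * (k - 1) / 2 * (2 * e / m ^ 2)
      = k * (k - 1) * e * (m + 4 * ((k - 1) * w)) / m ^ 3 := by
        field_simp
        ring
    _ ≤ k * (k - 1) * w ^ 2 * ((k - 1) * w + 4 * ((k - 1) * w)) / m ^ 3 := by gcongr
    _ = k * (k - 1) ^ 2 * w ^ 3 * (5 * m) / m ^ 4 := by
        field_simp
        ring
    _ ≤ k * (k - 1) ^ 2 * w ^ 3 * (k * (γ ^ 3 * w)) / m ^ 4 := by gcongr
    _ = γ * (γ * w ^ 2 * (k * (k - 1)) / m ^ 2) ^ 2 := by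
        field_simp

end Threshold

theorem card_adj_pairs_concentration {ι E : Type*} [Fintype ι] [LinearOrder ι] [Fintype E]
    (H : SimpleGraph E) [DecidableRel H.Adj] (hH : 0 < #H.edgeFinset) {w γ : ℝ} (hw : 0 < w)
    (hwE : w ≤ Fintype.card E) (hHw : #H.edgeFinset ≤ w ^ 2) (hdeg : ∀ a, H.degree a ≤ 2 * w)
    (hγ : 0 < γ) (hk : 5 * Fintype.card E / (γ ^ 3 * w) ≤ Fintype.card ι) :
    1 - γ ≤
      (#{r : ι → E |
        |(#{p : ι × ι | p.1 < p.2 ∧ H.Adj (r p.1) (r p.2)} : ℝ)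
          - (Fintype.card ι).choose 2 * (2 * #H.edgeFinset / (Fintype.card E : ℝ) ^ 2)|
        ≤ γ * w ^ 2 / #H.edgeFinset * ((Fintype.card ι).choose 2
          * (2 * #H.edgeFinset / (Fintype.card E : ℝ) ^ 2))} : ℝ)
      / (Fintype.card E : ℝ) ^ Fintype.card ι := by
  rcases le_or_gt 1 γ with hγ1 | hγ1
  · exact (sub_nonpos.2 hγ1).trans (by positivity)
  have hE : (0 : ℝ) < Fintype.card E := hw.trans_le hwE
  have : Nonempty E := Fintype.card_pos_iff.1 (mod_cast hE)
  have hk1 : (0 : ℝ) < Fintype.card ι - 1 :=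
    sub_pos.2 (one_lt_of_five_mul_div_le hw hwE hγ hγ1.le hk)
  have hk0 : (0 : ℝ) < Fintype.card ι := by linarith
  have hfun : (Fintype.card (ι → E) : ℝ) = (Fintype.card E : ℝ) ^ Fintype.card ι := by
    rw [Fintype.card_fun, Nat.cast_pow]
  have hdev : γ * w ^ 2 / #H.edgeFinset * ((Fintype.card ι).choose 2
        * (2 * #H.edgeFinset / (Fintype.card E : ℝ) ^ 2))
      = γ * w ^ 2 * (Fintype.card ι * (Fintype.card ι - 1)) / (Fintype.card E : ℝ) ^ 2 := by
    rw [Nat.cast_choose_two]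
    field_simp
  have hvar := (expect_card_adj_pairs_sub_mean_sq_le (ι := ι) H hdeg).trans <|
    Nat.cast_choose_two ℝ (Fintype.card ι) ▸
      variance_le_mul_sq_of_five_mul_div_le hw hwE hγ hγ1.le hk hHw
  rw [hdev, ← hfun]
  refine le_trans ?_ (one_sub_expect_sq_div_le_card_abs_le _ (by positivity))
  gcongr
  exact div_le_of_le_mul₀ (by positivity) hγ.le hvar

theorem wedge_count_concentration_general {V : Type*} [Fintype V] [DecidableEq V]
    (G : SimpleGraph V) [DecidableRel G.Adj] {m W : ℕ} (hm : m = #G.edgeFinset)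
    (hW : W = ∑ v, (G.degree v).choose 2) {S : Finset (Sym2 (Sym2 V))} (hSne : S.Nonempty)
    (hS : ∀ w ∈ S, IsWedge G w) {γ : ℝ} (hγ : 0 < γ) {k : ℕ}
    (hk : 5 * (m : ℝ) / (γ ^ 3 * √W) ≤ k) :
    1 - γ ≤
      (#{r : Fin k → G.edgeFinset |
        |(#{p : Fin k × Fin k | p.1 < p.2 ∧ s((r p.1 : Sym2 V), (r p.2 : Sym2 V)) ∈ S} : ℝ)
          - k.choose 2 * (2 * #S / (m : ℝ) ^ 2)|
        ≤ γ * W / #S * (k.choose 2 * (2 * #S / (m : ℝ) ^ 2))} : ℝ) / (m : ℝ) ^ k := by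
  have hcard : Fintype.card G.edgeFinset = m := by rw [Fintype.card_coe, hm]
  have hS0 : 0 < #S := hSne.card_pos
  have hSW : #S ≤ W := hW ▸ card_le_sum_choose_two_degree hS
  have hwsq : √(W : ℝ) ^ 2 = W := Real.sq_sqrt (by positivity)
  have hw0 : 0 < √(W : ℝ) := Real.sqrt_pos.2 (mod_cast hS0.trans_le hSW)
  have hwm : √(W : ℝ) ≤ m :=
    Real.sqrt_le_iff.2 ⟨by positivity, mod_cast hm ▸ hW ▸ sum_choose_two_degree_le G⟩
  have hdeg (a : G.edgeFinset) : ((wedgeGraph G S).degree a : ℝ) ≤ 2 * √W :=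
    hW ▸ degree_wedgeGraph_le_two_mul_sqrt hS a
  have hconc := card_adj_pairs_concentration (ι := Fin k) (wedgeGraph G S)
    (by rwa [card_edgeFinset_wedgeGraph hS]) hw0 (by rwa [hcard])
    (by rw [card_edgeFinset_wedgeGraph hS, hwsq]; exact_mod_cast hSW) hdeg hγ
    (by rwa [hcard, Fintype.card_fin])
  simpa only [card_edgeFinset_wedgeGraph hS, wedgeGraph_adj hS, Fintype.card_fin, hcard, hwsq]
    using hconc

/-- Concentration via Chebyshev: there is an absolute constant `c' > 0` such that for
any graph with `m` edges and `W ≥ m` wedges, any fixed nonempty set `S` of wedges, any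
`γ > 0`, and any `k ≥ c'm/(γ³√W)` i.i.d. uniform random edges, the count `X` of wedges
of `S` formed by the sample satisfies `|X − E[X]| ≤ (γW/|S|)E[X]` with probability at
least `1 − γ`. -/
theorem wedge_count_concentration :
    ∃ c' : ℝ, 0 < c' ∧
      ∀ (V : Type) [Fintype V] [DecidableEq V] (G : SimpleGraph V) [DecidableRel G.Adj]
        (m W : ℕ), m = G.edgeFinset.card → 0 < m →
        W = ∑ v : V, (G.degree v).choose 2 → m ≤ W →
        ∀ (S : Finset (Sym2 (Sym2 V))), S.Nonempty →
        (∀ w ∈ S, ¬ w.IsDiag ∧ (∀ e ∈ w, e ∈ G.edgeFinset) ∧ ∃ v : V, ∀ e ∈ w, v ∈ e) →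
        ∀ (γ : ℝ), 0 < γ →
        ∀ (k : ℕ), c' * (m : ℝ) / (γ ^ 3 * Real.sqrt W) ≤ (k : ℝ) →
        1 - γ ≤
          ((Finset.univ.filter (fun r : Fin k → G.edgeFinset =>
            |((Finset.univ.filter (fun p : Fin k × Fin k =>
                p.1 < p.2 ∧ s((r p.1 : Sym2 V), (r p.2 : Sym2 V)) ∈ S)).card : ℝ)
              - (k.choose 2 : ℝ) * (2 * (S.card : ℝ) / (m : ℝ) ^ 2)|
            ≤ (γ * (W : ℝ) / (S.card : ℝ)) *
              ((k.choose 2 : ℝ) * (2 * (S.card : ℝ) / (m : ℝ) ^ 2)))).card : ℝ)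
            / (m : ℝ) ^ k :=
  ⟨5, by norm_num, fun _ _ _ G _ _ _ hm _ hW _ _ hSne hS _ hγ _ hk ↦
    wedge_count_concentration_general G hm hW hSne
      (fun w hw ↦ by simpa [IsWedge] using hS w hw) hγ hk⟩
end
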